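/- Let A ⊂ ℤ≥0 be finite with 0 ∈ A, N = #A ≥ 2, and suppose A ⊂ [0, M] with M < 5N/2. If A(x) = Σ_{a∈A} x^a has a spectrum θ₁,...,θ_{N-1}, then all θⱼ are rational. -/

import Mathlib

open Complex

/-!
The ratios `r ≠ 1` of the numbers `exp (2πiθⱼ)` are roots of `A(x)`, so these numbers, divided by
one of them, form a subset `S` of a number field `K`. By Kronecker's theorem it is enough that
every embedding `φ : K →+* ℂ` sends `S` to a single circle. If it does not, let `L` and `T` be the
parts of `S` sent to the innermost and the outermost circle. The ratios give `#(S / S) - 1` roots of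
`A(x)` on the unit circle and, through `φ`, further roots off it; comparing with the degree of
`A(x)`, which is less than `5N/2`, forces all estimates to be sharp: `N = 2 #L`, the ratios `r` with
`‖φ r‖ = 1` form a group `H` of order `N/2`, and `L` and `T` are cosets of `H`. Averaging `A(x)`
over `H` and over the coset `gH` of ratios of `T` to `L` kills all exponents but two, `b` and `c`,
and leaves `g ^ b + g ^ c = 0`, which contradicts `‖φ g‖ > 1`.
-/

open Finset
open scoped Pointwise NNReal

section Ratios

variable {G Γ : Type*} [CommGroup G] [DecidableEq G] {S : Finset G} {p q r : G}

lemma image_div_div_image_div (S : Finset G) (p : G) :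
    S.image (· / p) / S.image (· / p) = S / S := by
  ext r
  simp [mem_div]

section Fiber

variable [Group Γ] [DecidableEq Γ] {v : G →* Γ}

lemma image_div_fiber_subset (hp : p ∈ S) :
    {x ∈ S | v x = v p}.image (· / p) ⊆ {r ∈ S / S | v r = 1} := by
  rw [image_subset_iff]
  intro x hx
  obtain ⟨hxS, hxp⟩ := mem_filter.1 hx
  exact mem_filter.2 ⟨div_mem_div hxS hp, by rw [map_div, hxp, div_self']⟩

lemma card_fiber_le_card_ratios_eq_one (hp : p ∈ S) :
    #{x ∈ S | v x = v p} ≤ #{r ∈ S / S | v r = 1} := by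
  rw [← card_image_of_injective _ (div_left_injective (b := p))]
  exact card_le_card (image_div_fiber_subset hp)

lemma mul_mem_of_card_ratios_le_card_fiber (hp : p ∈ S)
    (hcard : #{r ∈ S / S | v r = 1} ≤ #{x ∈ S | v x = v p})
    (hr : r ∈ S / S) (hvr : v r = 1) : r * p ∈ S := by
  have himage : {x ∈ S | v x = v p}.image (· / p) = {r ∈ S / S | v r = 1} :=
    eq_of_subset_of_card_le (image_div_fiber_subset hp)
      (by rwa [card_image_of_injective _ div_left_injective])
  have hmem : r ∈ {x ∈ S | v x = v p}.image (· / p) := himage ▸ mem_filter.2 ⟨hr, hvr⟩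
  obtain ⟨x, hx, rfl⟩ := mem_image.1 hmem
  simpa only [div_mul_cancel] using (mem_filter.1 hx).1

lemma exists_subgroup_eq_ratios_eq_one (hp : p ∈ S)
    (hcard : #{r ∈ S / S | v r = 1} ≤ #{x ∈ S | v x = v p}) :
    ∃ H : Subgroup G, (H : Set G) = ({r ∈ S / S | v r = 1} : Finset G) := by
  refine ⟨Subgroup.ofDiv ({r ∈ S / S | v r = 1} : Finset G) ⟨1, ?_⟩ fun r hr s hs => ?_, rfl⟩
  · exact mem_filter.2 ⟨by simpa using div_mem_div hp hp, map_one v⟩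
  · obtain ⟨hr, hvr⟩ := mem_filter.1 hr
    obtain ⟨hs, hvs⟩ := mem_filter.1 hs
    have hs_inv : s⁻¹ ∈ S / S := by simpa only [inv_div] using inv_mem_inv hs
    have hvs_inv : v s⁻¹ = 1 := by rw [map_inv, hvs, inv_one]
    have hsp : s⁻¹ * p ∈ S := mul_mem_of_card_ratios_le_card_fiber hp hcard hs_inv hvs_inv
    have hrsp : r * (s⁻¹ * p) ∈ S :=
      mul_mem_of_card_ratios_le_card_fiber hsp (by simpa [hvs] using hcard) hr hvr
    refine mem_filter.2 ⟨?_, by rw [map_mul, hvr, hvs_inv, one_mul]⟩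
    simpa [← mul_assoc] using div_mem_div hrsp hp

end Fiber

variable [CommGroup Γ] [LinearOrder Γ] [IsOrderedMonoid Γ] {v : G →* Γ}

lemma card_filter_gt_le_card_ratios_gt_one (hp : p ∈ S) :
    #{x ∈ S | v p < v x} ≤ #{r ∈ S / S | 1 < v r} := by
  refine card_le_card_of_injOn (· / p) (fun x hx => ?_) div_left_injective.injOn
  obtain ⟨hxS, hpx⟩ := mem_filter.1 hx
  exact mem_filter.2 ⟨div_mem_div hxS hp, by rwa [map_div, one_lt_div']⟩

lemma card_filter_lt_le_card_ratios_gt_one (hq : q ∈ S) :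
    #{x ∈ S | v x < v q} ≤ #{r ∈ S / S | 1 < v r} := by
  refine card_le_card_of_injOn (q / ·) (fun x hx => ?_) div_right_injective.injOn
  obtain ⟨hxS, hxq⟩ := mem_filter.1 hx
  exact mem_filter.2 ⟨div_mem_div hq hxS, by rwa [map_div, one_lt_div']⟩

lemma card_ratios_ne_one (v : G →* Γ) (S : Finset G) :
    #{r ∈ S / S | v r ≠ 1} = 2 * #{r ∈ S / S | 1 < v r} := by
  have hinv : #{r ∈ S / S | v r < 1} = #{r ∈ S / S | 1 < v r} := by
    rw [← card_inv]
    congr 1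
    ext r
    simp
  have hunion : {r ∈ S / S | v r ≠ 1} = {r ∈ S / S | v r < 1} ∪ {r ∈ S / S | 1 < v r} := by
    rw [← filter_or]
    exact filter_congr fun r _ => lt_or_lt_iff_ne.symm
  have hdisj : Disjoint {r ∈ S / S | v r < 1} {r ∈ S / S | 1 < v r} :=
    disjoint_filter.2 fun _ _ => lt_asymm
  rw [hunion, card_union_of_disjoint hdisj, hinv, two_mul]

lemma card_eq_two_mul_card_ratios_eq_one (hp : p ∈ S) (hq : q ∈ S) (hpmin : ∀ x ∈ S, v p ≤ v x)
    (hqmax : ∀ x ∈ S, v x ≤ v q) (hpq : v p < v q)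
    (hcard : 2 * (#(S / S) + #{r ∈ S / S | v r ≠ 1}) ≤ 5 * #S + 1) :
    #S = 2 * #{r ∈ S / S | v r = 1} ∧
      #{r ∈ S / S | v r = 1} ≤ #{x ∈ S | v x = v p} ∧
      #{r ∈ S / S | v r = 1} ≤ #{x ∈ S | v x = v q} := by
  have hratios : #{r ∈ S / S | v r = 1} + #{r ∈ S / S | v r ≠ 1} = #(S / S) :=
    card_filter_add_card_filter_not _
  have hne := card_ratios_ne_one v S
  have hsplit_p : #{x ∈ S | v x = v p} + #{x ∈ S | v p < v x} = #S := by
    rw [← card_filter_add_card_filter_not (s := S) (fun x => v x = v p)]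
    congr 2
    exact filter_congr fun x hx => (hpmin x hx).lt_iff_ne'
  have hsplit_q : #{x ∈ S | v x = v q} + #{x ∈ S | v x < v q} = #S := by
    rw [← card_filter_add_card_filter_not (s := S) (fun x => v x = v q)]
    congr 2
    exact filter_congr fun x hx => (hqmax x hx).lt_iff_ne
  have hdisj : #{x ∈ S | v x = v p} ≤ #{x ∈ S | v x < v q} :=
    card_le_card (monotone_filter_right S fun x _ hx => hx.trans_lt hpq)
  have hp_eq := card_fiber_le_card_ratios_eq_one (v := v) hp
  have hq_eq := card_fiber_le_card_ratios_eq_one (v := v) hq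
  have hp_gt := card_filter_gt_le_card_ratios_gt_one (v := v) hp
  have hq_lt := card_filter_lt_le_card_ratios_gt_one (v := v) hq
  omega

theorem exists_subgroup_of_card_ratios_le (hv : ∃ x ∈ S, ∃ y ∈ S, v x ≠ v y)
    (hcard : 2 * (#(S / S) + #{r ∈ S / S | v r ≠ 1}) ≤ 5 * #S + 1) :
    ∃ (H : Subgroup G) (g : G), #S = 2 * Nat.card H ∧ 1 < v g ∧
      (∀ h ∈ H, v h = 1 ∧ h ∈ S / S) ∧ ∀ h ∈ H, g * h ∈ S / S := by
  obtain ⟨x, hx, y, hy, hxy⟩ := hv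
  obtain ⟨p, hp, hpmin⟩ := S.exists_min_image v ⟨x, hx⟩
  obtain ⟨q, hq, hqmax⟩ := S.exists_max_image v ⟨x, hx⟩
  have hpq : v p < v q := by
    refine (hpmin q hq).lt_of_ne fun h => hxy ?_
    exact ((hqmax x hx).trans (h ▸ hpmin y hy)).antisymm ((hqmax y hy).trans (h ▸ hpmin x hx))
  obtain ⟨hS, hL, hT⟩ := card_eq_two_mul_card_ratios_eq_one hp hq hpmin hqmax hpq hcard
  obtain ⟨H, hH⟩ := exists_subgroup_eq_ratios_eq_one hp hL
  have hmem {h : G} (hh : h ∈ H) : h ∈ S / S ∧ v h = 1 := by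
    rwa [← SetLike.mem_coe, hH, mem_coe, mem_filter] at hh
  refine ⟨H, q / p, ?_, by rwa [map_div, one_lt_div'], fun h hh => (hmem hh).symm, ?_⟩
  · rw [hS, ← SetLike.coe_sort_coe, hH, Nat.card_coe_set_eq, Set.ncard_coe_finset]
  · intro h hh
    obtain ⟨hhS, hvh⟩ := hmem hh
    have hhq : h * q ∈ S := mul_mem_of_card_ratios_le_card_fiber hq hT hhS hvh
    have := div_mem_div hhq hp
    rwa [mul_comm h q, mul_div_right_comm] at this

end Ratios

open Polynomial

section MaskPolynomial

/-- The polynomial `A(x) = ∑ a ∈ A, x ^ a`, taken over `ℤ` so that its roots in every ring are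
expressed by `aeval`. -/
noncomputable def maskPolynomial (A : Finset ℕ) : ℤ[X] :=
  ∑ a ∈ A, X ^ a

variable {A : Finset ℕ}

lemma aeval_maskPolynomial {R : Type*} [CommRing R] (A : Finset ℕ) (x : R) :
    aeval x (maskPolynomial A) = ∑ a ∈ A, x ^ a := by
  simp [maskPolynomial]

lemma monic_maskPolynomial (hA : A.Nonempty) : (maskPolynomial A).Monic := by
  have hmax := A.max'_mem hA
  rw [maskPolynomial, ← add_sum_erase A _ hmax]
  refine monic_X_pow_add ((degree_sum_le _ _).trans_lt
    ((Finset.sup_lt_iff (WithBot.bot_lt_coe _)).2 fun a ha => ?_))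
  rw [degree_X_pow]
  exact WithBot.coe_lt_coe.2 (A.lt_max'_of_mem_erase_max' hA ha)

lemma natDegree_maskPolynomial_le {M : ℕ} (hAM : ∀ a ∈ A, a ≤ M) :
    (maskPolynomial A).natDegree ≤ M :=
  natDegree_sum_le_of_forall_le _ _ fun a ha => by simpa using hAM a ha

section Averaging

variable {R : Type*} [CommRing R] [IsDomain R] (H : Subgroup Rˣ)

lemma sum_subgroup_pow [Fintype H] (a : ℕ) [Decidable (∀ h ∈ H, h ^ a = 1)] :
    ∑ h : H, ((h : Rˣ) : R) ^ a = if ∀ h ∈ H, h ^ a = 1 then (Nat.card H : R) else 0 := by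
  classical
  let f : H →* R := ((Units.coeHom R).comp H.subtype).comp (powMonoidHom a)
  have hf : f = 1 ↔ ∀ h ∈ H, h ^ a = 1 := by
    simp [f, DFunLike.ext_iff, Units.ext_iff]
  simpa [f, hf] using sum_hom_units f

lemma sum_subgroup_aeval_maskPolynomial [Fintype H] [DecidablePred fun a => ∀ h ∈ H, h ^ a = 1]
    (A : Finset ℕ) (g : Rˣ) :
    ∑ h : H, aeval ((g * h : Rˣ) : R) (maskPolynomial A) =
      Nat.card H * ∑ a ∈ A with ∀ h ∈ H, h ^ a = 1, (g : R) ^ a := by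
  simp_rw [aeval_maskPolynomial, Units.val_mul, mul_pow]
  rw [sum_comm, sum_filter, mul_sum]
  refine sum_congr rfl fun a _ => ?_
  rw [← mul_sum, sum_subgroup_pow]
  split_ifs <;> ring

lemma exists_pow_add_pow_eq_zero [CharZero R] [Finite H] {g : Rˣ} (hcard : #A = 2 * Nat.card H)
    (hH : ∀ h ∈ H, h ≠ 1 → aeval (h : R) (maskPolynomial A) = 0)
    (hg : ∀ h ∈ H, aeval ((g * h : Rˣ) : R) (maskPolynomial A) = 0) :
    ∃ b c : ℕ, b ≠ c ∧ (g : R) ^ b + (g : R) ^ c = 0 := by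
  classical
  have := Fintype.ofFinite H
  have hH0 : (Nat.card H : R) ≠ 0 := Nat.cast_ne_zero.2 Nat.card_pos.ne'
  have hcard_stab : #{a ∈ A | ∀ h ∈ H, h ^ a = 1} = 2 := by
    have hsum := sum_subgroup_aeval_maskPolynomial H A 1
    rw [sum_eq_single_of_mem 1 (mem_univ _) fun h _ hne => by
      simpa using hH h h.2 (by simpa using hne)] at hsum
    simp only [OneMemClass.coe_one, mul_one, Units.val_one, aeval_maskPolynomial, one_pow,
      sum_const, nsmul_one, hcard] at hsum
    rw [Nat.cast_mul, mul_comm] at hsum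
    exact_mod_cast (mul_left_cancel₀ hH0 hsum).symm
  obtain ⟨b, c, hbc, hstab⟩ := card_eq_two.1 hcard_stab
  refine ⟨b, c, hbc, ?_⟩
  have hsum := sum_subgroup_aeval_maskPolynomial H A g
  rw [sum_eq_zero fun (h : H) _ => hg h h.2, hstab, sum_pair hbc] at hsum
  exact (mul_eq_zero.1 hsum.symm).resolve_left hH0

end Averaging

end MaskPolynomial

section Embeddings

variable {K E : Type*} [Field K] [NormedField E]

/-- The homomorphism `x ↦ ‖φ x‖` on units, with values in the linearly ordered group of positive
reals. -/
noncomputable def unitsNNNorm (φ : K →+* E) : Kˣ →* ℝ≥0ˣ :=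
  Units.map ((nnnormHom : E →*₀ ℝ≥0).toMonoidHom.comp φ)

lemma coe_unitsNNNorm (φ : K →+* E) (x : Kˣ) : (unitsNNNorm φ x : ℝ≥0) = ‖φ x‖₊ :=
  rfl

lemma unitsNNNorm_eq_iff {φ : K →+* E} {x y : Kˣ} :
    unitsNNNorm φ x = unitsNNNorm φ y ↔ ‖φ x‖ = ‖φ y‖ := by
  rw [Units.ext_iff, coe_unitsNNNorm, coe_unitsNNNorm, NNReal.eq_iff, coe_nnnorm, coe_nnnorm]

lemma unitsNNNorm_eq_one_iff {φ : K →+* E} {x : Kˣ} : unitsNNNorm φ x = 1 ↔ ‖φ x‖ = 1 := by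
  rw [← map_one (unitsNNNorm φ), unitsNNNorm_eq_iff, Units.val_one, map_one, norm_one]

lemma aeval_map_eq_zero {φ : K →+* E} {P : ℤ[X]} {x : K} (hx : aeval x P = 0) :
    aeval (φ x) P = 0 := by
  rw [← RingHom.toIntAlgHom_apply, aeval_algHom_apply, hx, map_zero]

variable [CharZero E]

lemma card_add_card_norm_ne_one_le_natDegree (ψ φ : K →+* E) {P : ℤ[X]} (hP : P ≠ 0)
    {R : Finset K} (hroot : ∀ r ∈ R, aeval r P = 0) (hψ : ∀ r ∈ R, ‖ψ r‖ = 1) :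
    #R + #{r ∈ R | ‖φ r‖ ≠ 1} ≤ P.natDegree := by
  classical
  have hdisj : Disjoint (R.image ψ) ({r ∈ R | ‖φ r‖ ≠ 1}.image φ) := by
    simp_rw [disjoint_left, forall_mem_image, mem_image, not_exists, not_and]
    intro r hr s hs hsr
    exact (mem_filter.1 hs).2 (hsr ▸ hψ r hr)
  rw [← card_image_of_injective R ψ.injective, ← card_image_of_injective _ φ.injective,
    ← card_union_of_disjoint hdisj]
  refine (card_le_degree_of_subset_roots (p := P.map (algebraMap ℤ E)) fun z hz => ?_).trans
    natDegree_map_le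
  refine mem_aroots.2 ⟨hP, ?_⟩
  rcases mem_union.1 hz with hz | hz
  · obtain ⟨r, hr, rfl⟩ := mem_image.1 hz
    exact aeval_map_eq_zero (hroot r hr)
  · obtain ⟨r, hr, rfl⟩ := mem_image.1 hz
    exact aeval_map_eq_zero (hroot r (mem_filter.1 hr).1)

variable {A : Finset ℕ} {M : ℕ} {S : Finset Kˣ}

lemma card_ratios_add_card_unitsNNNorm_ne_one_le [DecidableEq K] (ψ φ : K →+* E)
    (hA : A.Nonempty) (hAM : ∀ a ∈ A, a ≤ M) (hS : S.Nonempty)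
    (hψ : ∀ r ∈ S / S, ‖ψ r‖ = 1)
    (hroot : ∀ r ∈ S / S, r ≠ 1 → aeval (r : K) (maskPolynomial A) = 0) :
    #(S / S) + #{r ∈ S / S | unitsNNNorm φ r ≠ 1} ≤ M + 1 := by
  have h1 : 1 ∈ S / S := by
    obtain ⟨x, hx⟩ := hS
    simpa only [div_self'] using div_mem_div hx hx
  have hle := (card_add_card_norm_ne_one_le_natDegree ψ φ
    (R := ((S / S).erase 1).map ⟨Units.val, Units.val_injective⟩)
    (monic_maskPolynomial hA).ne_zero
    (forall_mem_map.2 fun r hr => hroot r (mem_of_mem_erase hr) (ne_of_mem_erase hr))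
    (forall_mem_map.2 fun r hr => hψ r (mem_of_mem_erase hr))).trans
    (natDegree_maskPolynomial_le hAM)
  have hfilter : {r ∈ S / S | unitsNNNorm φ r ≠ 1} =
      ((S / S).erase 1).filter fun r : Kˣ => ‖φ r‖ ≠ 1 := by
    simp_rw [ne_eq, ← unitsNNNorm_eq_one_iff]
    rw [filter_erase, erase_eq_of_notMem (by simp)]
  have hpos : 0 < #(S / S) := card_pos.2 ⟨1, h1⟩
  rw [filter_map, card_map, card_map, card_erase_of_mem h1] at hle
  rw [hfilter]
  simp only [Function.comp_def, Function.Embedding.coeFn_mk] at hle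
  omega

theorem norm_eq_norm_of_aeval_ratios [DecidableEq K] (ψ φ : K →+* E)
    (hAM : ∀ a ∈ A, a ≤ M) (hM : 2 * M < 5 * #A) (hcard : #S = #A)
    (hψ : ∀ r ∈ S / S, ‖ψ r‖ = 1)
    (hroot : ∀ r ∈ S / S, r ≠ 1 → aeval (r : K) (maskPolynomial A) = 0) :
    ∀ x ∈ S, ∀ y ∈ S, ‖φ x‖ = ‖φ y‖ := by
  by_contra! hne
  have : CharZero K := ψ.charZero
  have hA : 0 < #A := by omega
  have hcount := card_ratios_add_card_unitsNNNorm_ne_one_le ψ φ (card_pos.1 hA) hAM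
    (card_pos.1 (hcard ▸ hA)) hψ hroot
  obtain ⟨H, g, hSH, hg, hH, hgH⟩ := exists_subgroup_of_card_ratios_le (S := S)
    (v := unitsNNNorm φ) (by simpa only [ne_eq, unitsNNNorm_eq_iff] using hne) (by omega)
  have : Finite H := Nat.finite_of_card_ne_zero (by omega)
  have hgH_ne_one : ∀ h ∈ H, g * h ≠ 1 := by
    intro h hh hgh
    have hvgh : unitsNNNorm φ (g * h) = unitsNNNorm φ g := by rw [map_mul, (hH h hh).1, mul_one]
    exact hg.ne' (by rw [← hvgh, hgh, map_one])
  obtain ⟨b, c, hbc, hsum⟩ := exists_pow_add_pow_eq_zero H (hcard ▸ hSH)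
    (fun h hh => hroot h (hH h hh).2) fun h hh => hroot _ (hgH h hh) (hgH_ne_one h hh)
  have hpow : unitsNNNorm φ g ^ b = unitsNNNorm φ g ^ c := by
    rw [← map_pow, ← map_pow, unitsNNNorm_eq_iff, Units.val_pow_eq_pow_val,
      Units.val_pow_eq_pow_val, eq_neg_of_add_eq_zero_left hsum, map_neg, norm_neg]
  exact hbc ((pow_right_strictMono' hg).injective hpow)

end Embeddings

section RootsOfUnity

variable {A : Finset ℕ} {M : ℕ}

lemma isIntegral_of_aeval_maskPolynomial {R : Type*} [CommRing R] (hA : A.Nonempty) {x : R}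
    (hx : x ≠ 1 → aeval x (maskPolynomial A) = 0) : IsIntegral ℤ x := by
  obtain rfl | hx1 := eq_or_ne x 1
  · exact isIntegral_one
  · exact ⟨maskPolynomial A, monic_maskPolynomial hA, hx hx1⟩

theorem isOfFinOrder_of_aeval_ratios_of_numberField {K : Type*} [Field K] [NumberField K]
    [DecidableEq K] (ψ : K →+* ℂ) (hAM : ∀ a ∈ A, a ≤ M) (hM : 2 * M < 5 * #A) {S : Finset Kˣ}
    (hcard : #S = #A) (hψ : ∀ r ∈ S / S, ‖ψ r‖ = 1)
    (hroot : ∀ r ∈ S / S, r ≠ 1 → aeval (r : K) (maskPolynomial A) = 0) :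
    ∀ r ∈ S / S, IsOfFinOrder r := by
  intro r hr
  have hint : IsIntegral ℤ (r : K) :=
    isIntegral_of_aeval_maskPolynomial (card_pos.1 (by omega)) fun hr1 =>
      hroot r hr (by simpa using hr1)
  have hnorm (φ : K →+* ℂ) : ‖φ r‖ = 1 := by
    obtain ⟨x, hx, y, hy, rfl⟩ := mem_div.1 hr
    rw [Units.val_div_eq_div_val, map_div₀, norm_div,
      norm_eq_norm_of_aeval_ratios ψ φ hAM hM hcard hψ hroot x hx y hy]
    exact div_self (norm_ne_zero_iff.2 ((map_ne_zero φ).2 y.ne_zero))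
  obtain ⟨n, hn, hrn⟩ := NumberField.Embeddings.pow_eq_one_of_norm_eq_one K ℂ hint hnorm
  exact isOfFinOrder_iff_pow_eq_one.2 ⟨n, hn, Units.ext (by simpa using hrn)⟩

lemma exists_numberField_image_units_eq {S : Finset ℂˣ}
    (hS : ∀ x ∈ S, IsIntegral ℚ (x : ℂ)) :
    ∃ (K : IntermediateField ℚ ℂ) (S' : Finset Kˣ),
      NumberField K ∧ S'.image (Units.map (algebraMap K ℂ : K →* ℂ)) = S := by
  classical
  let T : Set ℂ := Units.val '' (S : Set ℂˣ)
  let K := IntermediateField.adjoin ℚ T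
  have : Finite T := (S.finite_toSet.image _).to_subtype
  have : FiniteDimensional ℚ K :=
    IntermediateField.finiteDimensional_adjoin (Set.forall_mem_image.2 hS)
  have hinj : Function.Injective (Units.map (algebraMap K ℂ : K →* ℂ)) :=
    Units.map_injective (algebraMap K ℂ).injective
  refine ⟨K, S.preimage _ hinj.injOn, { }, ?_⟩
  rw [image_preimage]
  refine filter_true_of_mem fun x hx => ?_
  let y : K := ⟨x, IntermediateField.subset_adjoin ℚ T ⟨x, hx, rfl⟩⟩
  exact ⟨Units.mk0 y fun hy => x.ne_zero (congrArg (algebraMap K ℂ) hy), Units.ext rfl⟩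

theorem isOfFinOrder_of_aeval_ratios (hAM : ∀ a ∈ A, a ≤ M) (hM : 2 * M < 5 * #A)
    {S : Finset ℂˣ} (hcard : #S = #A) (hnorm : ∀ r ∈ S / S, ‖(r : ℂ)‖ = 1)
    (hroot : ∀ r ∈ S / S, r ≠ 1 → aeval (r : ℂ) (maskPolynomial A) = 0) :
    ∀ r ∈ S / S, IsOfFinOrder r := by
  classical
  have hA : 0 < #A := by omega
  obtain ⟨p, hp⟩ : S.Nonempty := card_pos.1 (hcard ▸ hA)
  obtain ⟨K, S', _, hS'⟩ := exists_numberField_image_units_eq (S := S.image (· / p))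
    (forall_mem_image.2 fun x hx =>
      (isIntegral_of_aeval_maskPolynomial (card_pos.1 hA) fun h =>
        hroot (x / p) (div_mem_div hx hp) fun h1 => h (by rw [h1, Units.val_one])).tower_top)
  let j : Kˣ →* ℂˣ := Units.map (algebraMap K ℂ : K →* ℂ)
  have hj : Function.Injective j := Units.map_injective (algebraMap K ℂ).injective
  have himage : (S' / S').image j = S / S := by
    rw [image_div, hS', image_div_div_image_div]
  have hmem : ∀ r ∈ S' / S', j r ∈ S / S := fun r hr => himage ▸ mem_image_of_mem j hr
  have hcard' : #S' = #A := by
    rw [← card_image_of_injective S' hj, hS', card_image_of_injective _ div_left_injective, hcard]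
  rw [← himage, forall_mem_image]
  refine fun r hr => j.isOfFinOrder (isOfFinOrder_of_aeval_ratios_of_numberField (algebraMap K ℂ)
    hAM hM hcard' (fun r hr => hnorm _ (hmem r hr)) (fun r hr hr1 => ?_) r hr)
  refine (algebraMap K ℂ).injective ?_
  rw [map_zero, ← aeval_algebraMap_apply]
  exact hroot (j r) (hmem r hr) ((map_ne_one_iff j hj).2 hr1)

theorem isOfFinOrder_div_of_aeval_div {ι : Type*} [Fintype ι] {e : ι → ℂˣ}
    (hcard : Fintype.card ι = #A) (hAM : ∀ a ∈ A, a ≤ M) (hM : 2 * M < 5 * #A)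
    (hnorm : ∀ i j, ‖((e i / e j : ℂˣ) : ℂ)‖ = 1)
    (hroot : ∀ i j, i ≠ j → aeval ((e i / e j : ℂˣ) : ℂ) (maskPolynomial A) = 0) (i j : ι) :
    IsOfFinOrder (e i / e j) := by
  classical
  have he : Function.Injective e := by
    intro i j hij
    by_contra hne
    have hA := hroot i j hne
    rw [hij, div_self', aeval_maskPolynomial] at hA
    have hA0 : #A = 0 := by simpa using hA
    omega
  have hratio : ∀ r ∈ univ.image e / univ.image e, ∃ i j, e i / e j = r := by
    simp [mem_div]
  refine isOfFinOrder_of_aeval_ratios hAM hM (S := univ.image e) ?_ (fun r hr => ?_)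
    (fun r hr hr1 => ?_) _
    (div_mem_div (mem_image_of_mem e (mem_univ i)) (mem_image_of_mem e (mem_univ j)))
  · rw [card_image_of_injective _ he, card_univ, hcard]
  · obtain ⟨i, j, rfl⟩ := hratio r hr
    exact hnorm i j
  · obtain ⟨i, j, rfl⟩ := hratio r hr
    exact hroot i j fun hij => hr1 (by rw [hij, div_self'])

lemma coe_toUnits_fourierChar (t : ℝ) :
    (Circle.toUnits (Real.fourierChar t) : ℂ) = exp (2 * Real.pi * I * t) := by
  rw [Circle.toUnits_apply, Units.val_mk0, Real.fourierChar_apply]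
  push_cast
  ring_nf

lemma exists_rat_eq_of_isOfFinOrder_fourierChar {t : ℝ} (ht : IsOfFinOrder (Real.fourierChar t)) :
    ∃ q : ℚ, t = q := by
  obtain ⟨n, hn, htn⟩ := isOfFinOrder_iff_pow_eq_one.1 ht
  rw [← AddChar.map_nsmul_eq_pow, Real.fourierChar_apply', Circle.exp_eq_one] at htn
  obtain ⟨k, hk⟩ := htn
  have hnk : n * t = k := mul_left_cancel₀ Real.two_pi_pos.ne' (by
    rw [nsmul_eq_mul] at hk
    linear_combination hk)
  refine ⟨k / n, ?_⟩
  rw [Rat.cast_div, Rat.cast_intCast, Rat.cast_natCast, ← hnk, mul_div_cancel_left₀]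
  exact Nat.cast_ne_zero.2 hn.ne'

end RootsOfUnity

theorem stmt14_general {ι : Type*} [Fintype ι] {A : Finset ℕ} (hcard : Fintype.card ι = #A) {M : ℕ}
    (hAM : ∀ a ∈ A, a ≤ M) (hM : 2 * M < 5 * #A) (θ : ι → ℝ)
    (hspec : ∀ i j, i ≠ j →
      ∑ a ∈ A, Complex.exp (2 * Real.pi * Complex.I * (θ i - θ j)) ^ a = 0) (i j : ι) :
    ∃ q : ℚ, θ i - θ j = q := by
  let e (i : ι) : ℂˣ := Circle.toUnits (Real.fourierChar (θ i))
  have hdiv (i j : ι) : e i / e j = Circle.toUnits (Real.fourierChar (θ i - θ j)) := by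
    rw [AddChar.map_sub_eq_div, _root_.map_div]
  have hfin : IsOfFinOrder (e i / e j) := by
    refine isOfFinOrder_div_of_aeval_div hcard hAM hM (fun i j => ?_) (fun i j hij => ?_) i j
    · rw [hdiv, Circle.toUnits_apply, Units.val_mk0, Circle.norm_coe]
    · rw [aeval_maskPolynomial, hdiv, coe_toUnits_fourierChar, ofReal_sub, hspec i j hij]
  rw [hdiv, Function.Injective.isOfFinOrder_iff (f := Circle.toUnits)
    unitSphereToUnits_injective] at hfin
  exact exists_rat_eq_of_isOfFinOrder_fourierChar hfin

theorem stmt14 (A : Finset ℕ) (h0A : 0 ∈ A) (N : ℕ) (hN : N = A.card) (hN2 : 2 ≤ N)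
    (M : ℕ) (hAM : ∀ a ∈ A, a ≤ M) (hM : 2 * M < 5 * N)
    (θ : Fin N → ℝ) (h0 : ∀ h : 0 < N, θ ⟨0, h⟩ = 0)
    (hinj : Function.Injective θ)
    (hIoo : ∀ j h, j ≠ ⟨0, h⟩ → θ j ∈ Set.Ioo (0 : ℝ) 1)
    (hspec : ∀ i j, i ≠ j →
      ∑ a ∈ A, Complex.exp (2 * Real.pi * Complex.I * (θ i - θ j)) ^ a = 0) :
    ∀ j, ∃ q : ℚ, θ j = (q : ℝ) := by
  intro j
  subst hN
  have hpos : 0 < #A := by omega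
  simpa only [h0 hpos, sub_zero] using
    stmt14_general (Fintype.card_fin _) hAM hM θ hspec j ⟨0, hpos⟩
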